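/- arXiv:1705.09574 — 2 statements merged into one kernel-verified Lean document; each statement's English description precedes it below -/
import Mathlib

section
/- For every coherent set of desirable gambles K ⊆ ℝ^n, there exist an index set T and matrices A^t ∈ ℝ^{n×n} for t ∈ T, each with orthonormal rows and with every column lexicographically positive (A^t >_L 0_n), such that K = {g ∈ ℝ^n : A^t g >_L 0_n for all t ∈ T}. -/
open Matrix BigOperators

/-- `g <_L f`: `g` is lexicographically less than `f`, i.e. at the first index where they
differ, `g` is smaller. -/
def LexLt {n : ℕ} (g f : Fin n → ℝ) : Prop :=
  ∃ k : Fin n, (∀ i : Fin n, i < k → g i = f i) ∧ g k < f k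

/-- `g ≤_L f`: `g <_L f` or `g = f`. -/
def LexLe {n : ℕ} (g f : Fin n → ℝ) : Prop := LexLt g f ∨ g = f

/-- `A >_L 0_n`: every column of `A` is lexicographically positive. -/
def ColsLexPos {n : ℕ} (A : Matrix (Fin n) (Fin n) ℝ) : Prop :=
  ∀ j : Fin n, LexLt 0 (fun i => A i j)

/-- A coherent set of desirable gambles on an `n`-element outcome space. -/
def CohDesirable {n : ℕ} (K : Set (Fin n → ℝ)) : Prop :=
  (∀ g ∈ K, ∀ f ∈ K, g + f ∈ K) ∧                      -- A1
  (∀ g ∈ K, ∀ l : ℝ, 0 < l → l • g ∈ K) ∧              -- A2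
  (∀ g : Fin n → ℝ, (∀ i, 0 ≤ g i) → g ≠ 0 → g ∈ K) ∧  -- A3
  (0 : Fin n → ℝ) ∉ K                                   -- A4

/-!
A convex cone without lines in a nonzero finite-dimensional space lies in a closed half-space
`{x | 0 ≤ ⟪u, x⟫}` with `‖u‖ = 1`. The part of the cone on the bounding hyperplane `uᗮ` again
contains no line, so induction on the dimension extends `u` to an orthonormal basis in which every
nonzero element of the cone has lexicographically positive coordinates.

If `g ∉ K`, then adjoining `0` and the ray spanned by `-g` to `K` still creates no line. The matrix
whose rows are the resulting basis makes `K` lexicographically positive but `g` not; letting `g` run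
through the complement of `K` gives the representation. Its columns are the images of the indicator
gambles, which lie in `K`.
-/

open Module PointedCone

theorem lexLt_iff_toLex_lt {n : ℕ} {g f : Fin n → ℝ} : LexLt g f ↔ toLex g < toLex f :=
  Iff.rfl

theorem lexLt_zero_vecCons {n : ℕ} {a : ℝ} {v : Fin n → ℝ} :
    LexLt 0 (vecCons a v) ↔ 0 < a ∨ a = 0 ∧ LexLt 0 v := by
  have zero_eq_cons : (0 : Fin (n + 1) → ℝ) = Fin.cons 0 0 := (cons_zero_zero (n := n)).symm
  rw [zero_eq_cons, eq_comm (a := a)]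
  exact Fin.pi_lex_lt_cons_cons (· < ·)

theorem not_lexLt_zero_of_lexLt_zero_neg {n : ℕ} {v : Fin n → ℝ} (hv : LexLt 0 (-v)) :
    ¬ LexLt 0 v := by
  rw [lexLt_iff_toLex_lt, toLex_zero, toLex_neg, neg_pos] at hv
  exact hv.not_gt

theorem not_lexLt_self {n : ℕ} (v : Fin n → ℝ) : ¬ LexLt v v :=
  lexLt_iff_toLex_lt.not.2 (lt_irrefl (toLex v))

section OrderedRing

variable {R E F : Type*} [Ring R] [PartialOrder R] [IsOrderedRing R]
  [AddCommGroup E] [Module R E] [AddCommGroup F] [Module R F]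

theorem salient_comap_of_injective {C : PointedCone R F} (hC : (C : ConvexCone R F).Salient)
    {f : E →ₗ[R] F} (hf : Function.Injective f) : (C.comap f : ConvexCone R E).Salient :=
  fun x hx hx0 hnx ↦ hC (f x) hx ((map_ne_zero_iff f hf).2 hx0) (map_neg f x ▸ hnx)

theorem ne_top_of_salient [Nontrivial E] {C : PointedCone R E}
    (hC : (C : ConvexCone R E).Salient) : C ≠ ⊤ := by
  rintro rfl
  obtain ⟨x, hx⟩ := exists_ne (0 : E)
  exact hC x trivial hx trivial

theorem mem_hull_convexCone {C : ConvexCone R E} {x : E} :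
    x ∈ hull R (C : Set E) ↔ x = 0 ∨ x ∈ C := by
  refine ⟨fun hx ↦ ?_, ?_⟩
  · induction hx using Submodule.span_induction with
    | mem x hx => exact .inr hx
    | zero => exact .inl rfl
    | add x y _ _ hx hy =>
      rcases hx with rfl | hx
      · rwa [zero_add]
      rcases hy with rfl | hy
      · rw [add_zero]; exact .inr hx
      · exact .inr (C.add_mem hx hy)
    | smul c x _ hx =>
      rcases hx with rfl | hx
      · exact .inl (smul_zero c)
      rcases c.2.eq_or_lt with hc | hc
      · exact .inl (by rw [show c = 0 from Subtype.ext hc.symm, zero_smul])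
      · exact .inr (C.smul_mem hc hx)
  · rintro (rfl | hx)
    · exact Submodule.zero_mem _
    · exact subset_hull hx

theorem salient_hull_of_blunt {C : ConvexCone R E} (hC : C.Blunt) :
    (hull R (C : Set E) : ConvexCone R E).Salient := by
  intro x hx hx0 hnx
  exact hC.salient x ((mem_hull_convexCone.1 hx).resolve_left hx0) hx0
    ((mem_hull_convexCone.1 hnx).resolve_left (neg_ne_zero.2 hx0))

theorem mem_sup_hull_neg {C : PointedCone R E} {g x : E} :
    x ∈ C ⊔ hull R {-g} ↔ ∃ p ∈ C, ∃ a : R, 0 ≤ a ∧ p - a • g = x := by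
  simp only [Submodule.mem_sup, Submodule.mem_span_singleton, Subtype.exists, Nonneg.mk_smul,
    sub_eq_add_neg, smul_neg]
  aesop

end OrderedRing

theorem salient_sup_hull_neg {𝕜 E : Type*} [Field 𝕜] [LinearOrder 𝕜] [IsStrictOrderedRing 𝕜]
    [AddCommGroup E] [Module 𝕜 E] {C : PointedCone 𝕜 E} (hC : (C : ConvexCone 𝕜 E).Salient)
    {g : E} (hg : g ∈ C → g = 0) :
    ((C ⊔ hull 𝕜 {-g} : PointedCone 𝕜 E) : ConvexCone 𝕜 E).Salient := by
  intro x hx hx0 hnx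
  obtain ⟨p, hp, a, ha, rfl⟩ := mem_sup_hull_neg.1 hx
  obtain ⟨q, hq, b, hb, hqx⟩ := mem_sup_hull_neg.1 hnx
  have add_eq_smul : p + q = (a + b) • g := by
    linear_combination (norm := module) hqx
  have add_smul_eq_zero : (a + b) • g = 0 := by
    rcases (add_nonneg ha hb).eq_or_lt with hab | hab
    · rw [← hab, zero_smul]
    · rw [hg ((C.smul_mem_iff hab).1 (add_eq_smul ▸ C.add_mem hp hq)), smul_zero]
  have hp0 : p = 0 := by
    by_contra hp0
    have hneg : -p = q := neg_eq_of_add_eq_zero_right (add_eq_smul.trans add_smul_eq_zero)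
    exact hC p hp hp0 (hneg ▸ hq)
  have hag : a • g = 0 := by
    rcases smul_eq_zero.1 add_smul_eq_zero with hab | rfl
    · rw [((add_eq_zero_iff_of_nonneg ha hb).1 hab).1, zero_smul]
    · exact smul_zero a
  exact hx0 (by rw [hp0, hag, sub_zero])

theorem eq_top_of_zero_mem_interior {E : Type*} [AddCommGroup E] [Module ℝ E]
    [TopologicalSpace E] [ContinuousSMul ℝ E] {C : PointedCone ℝ E}
    (hC : (0 : E) ∈ interior (C : Set E)) : C = ⊤ := by
  refine eq_top_iff.2 fun x _ ↦ ?_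
  have tendsto_zero : Filter.Tendsto (fun c : ℝ ↦ c • x) (nhdsWithin 0 (Set.Ioi 0)) (nhds 0) := by
    have smul_continuous : Continuous fun c : ℝ ↦ c • x := by fun_prop
    simpa using (smul_continuous.tendsto 0).mono_left nhdsWithin_le_nhds
  obtain ⟨c, hcx, hc⟩ := ((tendsto_zero.eventually (mem_interior_iff_mem_nhds.1 hC)).and
    self_mem_nhdsWithin).exists
  exact (C.smul_mem_iff hc).1 hcx

theorem exists_dual_nonneg_of_ne_top {E : Type*} [NormedAddCommGroup E] [NormedSpace ℝ E]
    [FiniteDimensional ℝ E] {C : PointedCone ℝ E} (hC : C ≠ ⊤) :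
    ∃ f : StrongDual ℝ E, f ≠ 0 ∧ ∀ x ∈ C, 0 ≤ f x := by
  by_cases hspan : Submodule.span ℝ (C : Set E) = ⊤
  · have haffine : affineSpan ℝ (C : Set E) = ⊤ := by
      rw [← AffineSubspace.coe_eq_univ_iff, ← Set.insert_eq_of_mem (SetLike.mem_coe.2 C.zero_mem),
        affineSpan_insert_zero, hspan, Submodule.top_coe]
    obtain ⟨f, hf, hfC⟩ := geometric_hahn_banach_of_nonempty_interior_point C.convex
      (mt eq_top_of_zero_mem_interior hC)
      (C.convex.interior_nonempty_iff_affineSpan_eq_top.2 haffine)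
    exact ⟨-f, neg_ne_zero.2 hf, fun x hx ↦ by simpa using hfC x hx⟩
  · obtain ⟨f, hf, hker⟩ := Submodule.exists_le_ker_of_lt_top _ (lt_top_iff_ne_top.2 hspan)
    refine ⟨f.toContinuousLinearMap, by simpa using hf, fun x hx ↦ ?_⟩
    exact (LinearMap.mem_ker.1 (hker (Submodule.subset_span hx))).ge

section InnerProductSpace

variable {E : Type*} [NormedAddCommGroup E] [InnerProductSpace ℝ E] [FiniteDimensional ℝ E]

theorem exists_norm_eq_one_inner_nonneg_of_ne_top {C : PointedCone ℝ E} (hC : C ≠ ⊤) :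
    ∃ u : E, ‖u‖ = 1 ∧ ∀ x ∈ C, 0 ≤ inner ℝ u x := by
  obtain ⟨f, hf, hfC⟩ := exists_dual_nonneg_of_ne_top hC
  obtain ⟨v, rfl⟩ := (InnerProductSpace.toDual ℝ E).surjective f
  have hv : v ≠ 0 := by simpa using hf
  refine ⟨‖v‖⁻¹ • v, norm_smul_inv_norm hv, fun x hx ↦ ?_⟩
  rw [real_inner_smul_left]
  exact mul_nonneg (by positivity) (hfC x hx)

theorem exists_orthonormal_lexLt_of_salient {n : ℕ} (hn : finrank ℝ E = n) {C : PointedCone ℝ E}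
    (hC : (C : ConvexCone ℝ E).Salient) :
    ∃ b : Fin n → E, Orthonormal ℝ b ∧
      ∀ x ∈ C, x ≠ 0 → LexLt 0 (fun i ↦ inner ℝ (b i) x) := by
  induction n generalizing E with
  | zero =>
    have := finrank_zero_iff.1 hn
    exact ⟨![], .of_isEmpty _, fun x _ hx ↦ absurd (Subsingleton.elim x 0) hx⟩
  | succ n ih =>
    have : Fact (finrank ℝ E = n + 1) := ⟨hn⟩
    have : Nontrivial E := nontrivial_of_finrank_eq_succ hn
    obtain ⟨u, hu, hCu⟩ := exists_norm_eq_one_inner_nonneg_of_ne_top (ne_top_of_salient hC)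
    let H : Submodule ℝ E := (ℝ ∙ u)ᗮ
    have hH : finrank ℝ H = n :=
      Submodule.finrank_orthogonal_span_singleton (norm_ne_zero_iff.1 (by simp [hu]))
    obtain ⟨b, hb, hbC⟩ := ih hH (salient_comap_of_injective hC H.injective_subtype)
    have mem_H {x : E} : x ∈ H ↔ inner ℝ u x = 0 :=
      Submodule.mem_orthogonal_singleton_iff_inner_right
    refine ⟨vecCons u fun i ↦ (b i : E), orthonormal_vecCons_iff.2
      ⟨hu, fun i ↦ mem_H.1 (b i).2, hb.comp_linearIsometry H.subtypeₗᵢ⟩, fun x hx hx0 ↦ ?_⟩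
    have coords_eq : (fun i ↦ inner ℝ ((vecCons u fun i ↦ (b i : E) : Fin (n + 1) → E) i) x) =
        vecCons (inner ℝ u x) fun i ↦ inner ℝ (b i : E) x := by
      ext i; cases i using Fin.cases <;> rfl
    rw [coords_eq, lexLt_zero_vecCons]
    rcases (hCu x hx).eq_or_lt with hux | hux
    · exact .inr ⟨hux.symm, hbC ⟨x, mem_H.2 hux.symm⟩ hx (by simpa using hx0)⟩
    · exact .inl hux

theorem exists_orthonormal_lexLt_not_lexLt {n : ℕ} (hn : finrank ℝ E = n) {C : ConvexCone ℝ E}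
    (hC : C.Blunt) {g : E} (hg : g ∉ C) :
    ∃ b : Fin n → E, Orthonormal ℝ b ∧ (∀ x ∈ C, LexLt 0 (fun i ↦ inner ℝ (b i) x)) ∧
      ¬ LexLt 0 (fun i ↦ inner ℝ (b i) g) := by
  have hg_hull : g ∈ hull ℝ (C : Set E) → g = 0 :=
    fun h ↦ (mem_hull_convexCone.1 h).resolve_right hg
  obtain ⟨b, hb, hpos⟩ := exists_orthonormal_lexLt_of_salient hn
    (salient_sup_hull_neg (salient_hull_of_blunt hC) hg_hull)
  refine ⟨b, hb, fun x hx ↦ hpos x (Submodule.mem_sup_left (subset_hull hx)) ?_, ?_⟩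
  · rintro rfl
    exact hC hx
  rcases eq_or_ne g 0 with rfl | hg0
  · simp only [inner_zero_right]
    exact not_lexLt_self 0
  · refine not_lexLt_zero_of_lexLt_zero_neg ?_
    have hpos_neg := hpos (-g) (Submodule.mem_sup_right (subset_hull rfl)) (neg_ne_zero.2 hg0)
    simp only [inner_neg_right] at hpos_neg
    exact hpos_neg

end InnerProductSpace

theorem of_mul_transpose_eq_one_of_orthonormal {m n : Type*} [Fintype n] [DecidableEq m]
    {b : m → EuclideanSpace ℝ n} (hb : Orthonormal ℝ b) :
    (of fun i ↦ (b i).ofLp) * (of fun i ↦ (b i).ofLp)ᵀ = 1 := by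
  rw [← gram_eq_one_iff_orthonormal.2 hb]
  ext i j
  simp [mul_apply, gram_apply, PiLp.inner_apply, mul_comm]

theorem of_mulVec_eq_inner {m n : Type*} [Fintype n] (b : m → EuclideanSpace ℝ n) (x : n → ℝ) :
    (of fun i ↦ (b i).ofLp) *ᵥ x = fun i ↦ inner ℝ (b i) (WithLp.toLp 2 x) := by
  ext i
  simp [mulVec, dotProduct, PiLp.inner_apply, mul_comm]

theorem exists_orthogonal_matrix_lexLt_not_lexLt {n : ℕ} {C : ConvexCone ℝ (Fin n → ℝ)}
    (hC : C.Blunt) {g : Fin n → ℝ} (hg : g ∉ C) :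
    ∃ A : Matrix (Fin n) (Fin n) ℝ, A * Aᵀ = 1 ∧ (∀ x ∈ C, LexLt 0 (A *ᵥ x)) ∧
      ¬ LexLt 0 (A *ᵥ g) := by
  let e := (WithLp.linearEquiv 2 ℝ (Fin n → ℝ)).toLinearMap
  obtain ⟨b, hb, hpos, hneg⟩ := exists_orthonormal_lexLt_not_lexLt
    (C := C.comap e) finrank_euclideanSpace_fin hC (g := WithLp.toLp 2 g) hg
  refine ⟨of fun i ↦ (b i).ofLp, of_mul_transpose_eq_one_of_orthonormal hb, fun x hx ↦ ?_, ?_⟩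
  · rw [of_mulVec_eq_inner]
    exact hpos (WithLp.toLp 2 x) hx
  · rwa [of_mulVec_eq_inner]

namespace CohDesirable

variable {n : ℕ} {K : Set (Fin n → ℝ)}

/-- A coherent set of desirable gambles as a convex cone: axioms A1 and A2 are its closure
properties, and A4 says that it is blunt. -/
def toConvexCone (hK : CohDesirable K) : ConvexCone ℝ (Fin n → ℝ) where
  carrier := K
  smul_mem' c hc g hg := hK.2.1 g hg c hc
  add_mem' g hg f hf := hK.1 g hg f hf

theorem blunt_toConvexCone (hK : CohDesirable K) : hK.toConvexCone.Blunt :=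
  hK.2.2.2

theorem single_one_mem (hK : CohDesirable K) (j : Fin n) : Pi.single j 1 ∈ K := by
  have single_nonneg : (0 : Fin n → ℝ) ≤ Pi.single j 1 := Pi.single_nonneg.2 zero_le_one
  exact hK.2.2.1 _ single_nonneg (Pi.single_ne_zero_iff.2 one_ne_zero)

theorem colsLexPos_of_forall_lexLt (hK : CohDesirable K) {A : Matrix (Fin n) (Fin n) ℝ}
    (hA : ∀ g ∈ K, LexLt 0 (A *ᵥ g)) : ColsLexPos A := by
  intro j
  have hcol := hA _ (hK.single_one_mem j)
  rwa [mulVec_single_one] at hcol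

end CohDesirable

/-- Every coherent set of desirable gambles is an intersection of lexicographic
halfspaces determined by orthonormal matrices with lexicographically positive columns. -/
theorem desirable_representation {n : ℕ} (K : Set (Fin n → ℝ)) (hK : CohDesirable K) :
    ∃ (T : Type) (A : T → Matrix (Fin n) (Fin n) ℝ),
      (∀ t : T, A t * (A t)ᵀ = 1 ∧ ColsLexPos (A t)) ∧
      K = {g : Fin n → ℝ | ∀ t : T, LexLt 0 ((A t).mulVec g)} := by
  have separate (t : {g // g ∉ K}) := exists_orthogonal_matrix_lexLt_not_lexLt
    hK.blunt_toConvexCone (g := t.1) t.2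
  choose A horth hpos hneg using separate
  refine ⟨{g // g ∉ K}, A, fun t ↦ ⟨horth t, hK.colsLexPos_of_forall_lexLt (hpos t)⟩, ?_⟩
  refine Set.Subset.antisymm (fun g hg t ↦ hpos t g hg) fun g hall ↦ ?_
  by_contra hg
  exact hneg ⟨g, hg⟩ (hall ⟨g, hg⟩)
end

section
/- Let P ∈ ℝ^{n×n} be a full-rank row-stochastic matrix. Then there exists a matrix A ∈ ℝ^{n×n} with orthonormal rows (A Aᵀ = I) and all columns lexicographically positive (A >_L 0_n) such that A^◊ = P^◊, where M^◊ := {g ∈ ℝ^n : Mg >_L 0_n} for a matrix M. -/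
open Matrix BigOperators

/-- `M^◊` for a single matrix: the gambles mapped to a lexicographically positive
vector. -/
def matDiamond {n : ℕ} (M : Matrix (Fin n) (Fin n) ℝ) : Set (Fin n → ℝ) :=
  {g | LexLt 0 (M.mulVec g)}

/-- A row-stochastic matrix: every row is a probability mass function. -/
def RowStochastic {n : ℕ} (P : Matrix (Fin n) (Fin n) ℝ) : Prop :=
  (∀ i j : Fin n, 0 ≤ P i j) ∧ ∀ i : Fin n, ∑ j, P i j = 1

/-!
Gram–Schmidt applied to the rows of an invertible `P` gives `P = L A` with `A` orthogonal and `L`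
lower triangular with positive diagonal. The first nonzero entry of `L v` sits where that of `v`
does and has the same sign, so `L` preserves lexicographic positivity in both directions and
`P^◊ = A^◊`. The columns of a matrix are its values on the standard basis, so `P^◊` already
decides whether they are lexicographically positive, and this too passes from `P` to `A`.
-/

section GramSchmidt

open InnerProductSpace
open scoped ComplexOrder

variable {𝕜 ι : Type*} [RCLike 𝕜] [LinearOrder ι]

section InnerProductSpace

variable {E : Type*} [NormedAddCommGroup E] [InnerProductSpace 𝕜 E]
  [LocallyFiniteOrderBot ι]

theorem inner_gramSchmidt_self [WellFoundedLT ι] (f : ι → E) (i : ι) :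
    inner 𝕜 (gramSchmidt 𝕜 f i) (f i) = (‖gramSchmidt 𝕜 f i‖ : 𝕜) ^ 2 := by
  have earlier_terms_vanish : ∀ k ∈ Finset.Iio i, inner 𝕜 (gramSchmidt 𝕜 f i)
      ((inner 𝕜 (gramSchmidt 𝕜 f k) (f i) / (‖gramSchmidt 𝕜 f k‖ : 𝕜) ^ 2) •
        gramSchmidt 𝕜 f k) = 0 := fun k hk => by
    rw [inner_smul_right, gramSchmidt_orthogonal 𝕜 f (Finset.mem_Iio.mp hk).ne', mul_zero]
  conv_lhs => rw [gramSchmidt_def'' 𝕜 f i]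
  rw [inner_add_right, inner_sum, Finset.sum_eq_zero earlier_terms_vanish, add_zero,
    inner_self_eq_norm_sq_to_K]

theorem inner_gramSchmidtNormed_self [WellFoundedLT ι] (f : ι → E) (i : ι) :
    inner 𝕜 (gramSchmidtNormed 𝕜 f i) (f i) = (‖gramSchmidt 𝕜 f i‖ : 𝕜) := by
  rw [gramSchmidtNormed, inner_smul_left, inner_gramSchmidt_self, map_inv₀, RCLike.conj_ofReal,
    sq, ← mul_assoc, inv_mul_mul_self]

theorem inner_gramSchmidtOrthonormalBasis_self_pos [Fintype ι] [FiniteDimensional 𝕜 E]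
    (h : Module.finrank 𝕜 E = Fintype.card ι) {f : ι → E} (hf : LinearIndependent 𝕜 f) (i : ι) :
    0 < inner 𝕜 (gramSchmidtOrthonormalBasis h f i) (f i) := by
  have normed_ne_zero : gramSchmidtNormed 𝕜 f i ≠ 0 :=
    (gramSchmidtNormed_linearIndependent hf).ne_zero i
  rw [gramSchmidtOrthonormalBasis_apply h normed_ne_zero, inner_gramSchmidtNormed_self,
    RCLike.ofReal_pos]
  exact norm_pos_iff.mpr (gramSchmidt_ne_zero i hf)

end InnerProductSpace

variable [Fintype ι]

theorem exists_eq_unitary_mul_isUpperTriangular {M : Matrix ι ι 𝕜} (hM : IsUnit M) :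
    ∃ Q ∈ unitaryGroup ι 𝕜, ∃ R : Matrix ι ι 𝕜,
      R.IsUpperTriangular ∧ (∀ i, 0 < R i i) ∧ M = Q * R := by
  let : LocallyFiniteOrderBot ι := .ofIic ι (fun a => {x | x ≤ a}) (by simp)
  let columns : ι → EuclideanSpace 𝕜 ι := fun j => WithLp.toLp 2 (M.col j)
  have columns_independent : LinearIndependent 𝕜 columns :=
    (linearIndependent_cols_of_isUnit hM).map' (WithLp.linearEquiv 2 𝕜 (ι → 𝕜)).symm.toLinearMap
      (LinearEquiv.ker _)
  let e := EuclideanSpace.basisFun ι 𝕜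
  let b := gramSchmidtOrthonormalBasis finrank_euclideanSpace columns
  refine ⟨e.toBasis.toMatrix b, e.toMatrix_orthonormalBasis_mem_unitary b,
    b.toBasis.toMatrix columns, gramSchmidtOrthonormalBasis_inv_isUpperTriangular _ _,
    fun i => ?_, ?_⟩
  · rw [Module.Basis.toMatrix_apply, b.coe_toBasis_repr_apply, b.repr_apply_apply]
    exact inner_gramSchmidtOrthonormalBasis_self_pos _ columns_independent i
  · rw [← b.coe_toBasis, Module.Basis.toMatrix_mul_toMatrix]
    rfl

theorem exists_eq_isLowerTriangular_mul_unitary {M : Matrix ι ι 𝕜} (hM : IsUnit M) :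
    ∃ L : Matrix ι ι 𝕜, L.IsLowerTriangular ∧ (∀ i, 0 < L i i) ∧
      ∃ Q ∈ unitaryGroup ι 𝕜, M = L * Q := by
  obtain ⟨Q, hQ, R, hR, hpos, hQR⟩ :=
    exists_eq_unitary_mul_isUpperTriangular ((isUnit_transpose M).mpr hM)
  refine ⟨Rᵀ, hR.transpose, hpos, Qᵀ, transpose_mem_unitaryGroup_iff.mpr hQ, ?_⟩
  rw [← transpose_mul, ← hQR, transpose_transpose]

end GramSchmidt

section LowerTriangular

variable {R ι : Type*} [NonUnitalNonAssocSemiring R] [LinearOrder ι] [Fintype ι]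
  {L : Matrix ι ι R} {v : ι → R} {k : ι}

theorem mulVec_apply_of_isLowerTriangular (hL : L.IsLowerTriangular) (hv : ∀ i < k, v i = 0) :
    (L *ᵥ v) k = L k k * v k := by
  simp only [mulVec, dotProduct]
  refine Finset.sum_eq_single_of_mem k (Finset.mem_univ k) fun j _ hjk => ?_
  rcases hjk.lt_or_gt with hlt | hgt
  · rw [hv j hlt, mul_zero]
  · rw [hL hgt, zero_mul]

theorem forall_lt_mulVec_eq_zero_iff_of_isLowerTriangular [NoZeroDivisors R]
    (hL : L.IsLowerTriangular) (hdiag : ∀ i, L i i ≠ 0) :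
    (∀ i < k, (L *ᵥ v) i = 0) ↔ ∀ i < k, v i = 0 := by
  constructor
  · intro hLv i
    induction i using WellFoundedLT.induction with
    | ind i ih =>
      intro hik
      have diag_mul_eq_zero : L i i * v i = 0 := by
        rw [← mulVec_apply_of_isLowerTriangular hL fun j hji => ih j hji (hji.trans hik), hLv i hik]
      exact (mul_eq_zero.mp diag_mul_eq_zero).resolve_left (hdiag i)
  · intro hv i hik
    rw [mulVec_apply_of_isLowerTriangular hL fun j hji => hv j (hji.trans hik), hv i hik, mul_zero]

end LowerTriangular

section Lex

variable {n : ℕ}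

theorem lexLt_of_lt {g f : Fin n → ℝ} (h : g < f) : LexLt g f :=
  Pi.toLex_strictMono h

theorem lexLt_zero_iff {v : Fin n → ℝ} : LexLt 0 v ↔ ∃ k, (∀ i < k, v i = 0) ∧ 0 < v k := by
  simp only [LexLt, Pi.zero_apply, eq_comm]

variable {L : Matrix (Fin n) (Fin n) ℝ}

theorem lexLt_zero_mulVec_iff_of_isLowerTriangular (hL : L.IsLowerTriangular)
    (hpos : ∀ i, 0 < L i i) {v : Fin n → ℝ} : LexLt 0 (L *ᵥ v) ↔ LexLt 0 v := by
  simp only [lexLt_zero_iff,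
    forall_lt_mulVec_eq_zero_iff_of_isLowerTriangular hL fun i => (hpos i).ne']
  refine exists_congr fun k => and_congr_right fun hv => ?_
  rw [mulVec_apply_of_isLowerTriangular hL hv, mul_pos_iff_of_pos_left (hpos k)]

theorem matDiamond_mul_of_isLowerTriangular (hL : L.IsLowerTriangular) (hpos : ∀ i, 0 < L i i)
    (A : Matrix (Fin n) (Fin n) ℝ) : matDiamond (L * A) = matDiamond A := by
  ext g
  simp only [matDiamond, Set.mem_ofPred_eq, ← mulVec_mulVec,
    lexLt_zero_mulVec_iff_of_isLowerTriangular hL hpos]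

theorem colsLexPos_iff_single_mem_matDiamond {A : Matrix (Fin n) (Fin n) ℝ} :
    ColsLexPos A ↔ ∀ j, Pi.single j 1 ∈ matDiamond A := by
  simp only [matDiamond, Set.mem_ofPred_eq, mulVec_single_one]
  rfl

theorem colsLexPos_of_nonneg {P : Matrix (Fin n) (Fin n) ℝ} (hP : ∀ i j, 0 ≤ P i j)
    (hunit : IsUnit P) : ColsLexPos P := fun j =>
  lexLt_of_lt <| lt_of_le_of_ne (fun i => hP i j)
    ((linearIndependent_cols_of_isUnit hunit).ne_zero j).symm

theorem exists_orthonormal_same_polar_general {P : Matrix (Fin n) (Fin n) ℝ}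
    (hP : ColsLexPos P) (hunit : IsUnit P) :
    ∃ A : Matrix (Fin n) (Fin n) ℝ, A * Aᵀ = 1 ∧ ColsLexPos A ∧
      matDiamond A = matDiamond P := by
  obtain ⟨L, hL, hpos, A, hA, rfl⟩ := exists_eq_isLowerTriangular_mul_unitary hunit
  have same_polar : matDiamond A = matDiamond (L * A) :=
    (matDiamond_mul_of_isLowerTriangular hL hpos A).symm
  refine ⟨A, mem_unitaryGroup_iff.mp hA, ?_, same_polar⟩
  rw [colsLexPos_iff_single_mem_matDiamond, same_polar]
  exact colsLexPos_iff_single_mem_matDiamond.mp hP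

end Lex

/-- Every full-rank row-stochastic matrix determines the same semispace as some
orthonormal matrix with lexicographically positive columns. -/
theorem exists_orthonormal_same_polar {n : ℕ} (P : Matrix (Fin n) (Fin n) ℝ)
    (hP : RowStochastic P) (hfull : IsUnit P.det) :
    ∃ A : Matrix (Fin n) (Fin n) ℝ, A * Aᵀ = 1 ∧ ColsLexPos A ∧
      matDiamond A = matDiamond P :=
  have hunit : IsUnit P := (isUnit_iff_isUnit_det P).mpr hfull
  exists_orthonormal_same_polar_general (colsLexPos_of_nonneg hP.1 hunit) hunit
end
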